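/- Let T be a regular interval exchange transformation on k intervals and U(x) the coding of the orbit of x ∈ [0,1). Then for every factor w of U(x), the number of distinct return words over w in U(x) is exactly k (property R_k). -/

import Mathlib

/-- `w` occurs in the infinite word `U` at position `i`. -/
def OccursAt {A : Type*} (U : ℕ → A) (w : List A) (i : ℕ) : Prop :=
  ∀ j : Fin w.length, U (i + j) = w.get j

/-- `w` is a factor of the infinite word `U`. -/
def IsFactor {A : Type*} (U : ℕ → A) (w : List A) : Prop := ∃ i, OccursAt U w i

/-- `U` is recurrent: every factor occurs infinitely often. -/
def Recurrent {A : Type*} (U : ℕ → A) : Prop :=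
  ∀ w, IsFactor U w → ∀ N, ∃ i, N ≤ i ∧ OccursAt U w i

/-- The set of return words over `w` in `U`: words starting at an occurrence of `w`
and ending just before the next occurrence. -/
def ReturnWords {A : Type*} (U : ℕ → A) (w : List A) : Set (List A) :=
  {r | ∃ i j, OccursAt U w i ∧ OccursAt U w j ∧ i < j ∧
      (∀ t, i < t → t < j → ¬ OccursAt U w t) ∧
      r = List.ofFn (fun t : Fin (j - i) => U (i + t))}

/-- The complexity function: number of distinct factors of length `n`. -/
noncomputable def Complexity {A : Type*} (U : ℕ → A) (n : ℕ) : ℕ :=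
  Set.ncard {w : List A | w.length = n ∧ IsFactor U w}

open Set

/-- Left endpoint of the `i`-th interval: `∑_{j<i} λ_j`. -/
noncomputable def leftPt {k : ℕ} (lam : Fin k → ℝ) (i : Fin k) : ℝ :=
  ∑ j ∈ Finset.univ.filter (fun j => j < i), lam j

/-- The `i`-th exchanged interval `X_i = [∑_{j<i} λ_j, ∑_{j≤i} λ_j)`. -/
def Xint {k : ℕ} (lam : Fin k → ℝ) (i : Fin k) : Set ℝ :=
  Set.Ico (leftPt lam i) (leftPt lam i + lam i)

/-- The translation amount `a_i = ∑_{ℓ<σ⁻¹(i)} λ_{σ(ℓ)} − ∑_{ℓ<i} λ_ℓ`. -/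
noncomputable def transAmt {k : ℕ} (lam : Fin k → ℝ) (σ : Equiv.Perm (Fin k)) (i : Fin k) : ℝ :=
  (∑ j ∈ Finset.univ.filter (fun j => j < σ.symm i), lam (σ j)) - leftPt lam i

/-- `T` is the interval exchange transformation on `[0,1)` with data `(lam, σ)`
(extended by the identity outside `[0,1)`). -/
def IsIET {k : ℕ} (lam : Fin k → ℝ) (σ : Equiv.Perm (Fin k)) (T : ℝ → ℝ) : Prop :=
  (∀ i, 0 < lam i) ∧ (∑ i, lam i = 1) ∧
  (∀ i, ∀ x ∈ Xint lam i, T x = x + transAmt lam σ i) ∧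
  (∀ x, x ∉ Set.Ico (0:ℝ) 1 → T x = x)

/-- Keane's regularity condition: `T^n a_i = a_j` for interior endpoints forces `n = 0, i = j`
(stated symmetrically in `i, j`, which covers negative powers of the bijection `T`). -/
def KeaneRegular {k : ℕ} (lam : Fin k → ℝ) (T : ℝ → ℝ) : Prop :=
  ∀ n : ℕ, ∀ i j : Fin k, (i : ℕ) ≠ 0 → (j : ℕ) ≠ 0 →
    T^[n] (leftPt lam i) = leftPt lam j → n = 0 ∧ i = j

/-- `U` is the symbolic coding of the `T`-orbit of `x`: `U n = i` iff `T^n x ∈ X_i`. -/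
def IsCoding {k : ℕ} (lam : Fin k → ℝ) (T : ℝ → ℝ) (x : ℝ) (U : ℕ → Fin k) : Prop :=
  ∀ n, T^[n] x ∈ Xint lam (U n)

/-!
Let `L` be the length of `w` and let `J` be the interval of points whose itinerary starts with `w`,
so that return words over `w` are read off between consecutive visits to `J`. Over `J` stands the
Kakutani tower of the first return map, and the return word of `z ∈ J` changes exactly where a
point of the tower base has a point of `T^{-L} D` above it, `D` being the set of the `k - 1`
interior division points. By Keane's condition the points of `T^{-L} D` lie on distinct orbits, and
by minimality each of these orbits enters `J` in the past, so there are exactly `k - 1` such base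
points; none of them is the left endpoint of `J`. They cut `J` into `k` intervals with pairwise
different return words, and the orbit of `x`, being dense, visits all of them.

Minimality is a frontier argument: the set of points whose orbit hits a given interval is invariant
and has finitely many frontier points, while the orbit of such a frontier point is infinite and
stays in the frontier until it meets `D` (in the past: a discontinuity of `T⁻¹`). So a frontier
point would lie on an orbit segment from a discontinuity of `T⁻¹` to one of `T`, which Keane's
condition forbids.
-/

section

open Filter Topology

section Hitting

variable {α : Type*} {T : Equiv.Perm α} {J E : Set α} {x : α}

theorem symm_iterate_iterate (T : Equiv.Perm α) {m n : ℕ} (hmn : m ≤ n) (x : α) :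
    T.symm^[m] (T^[n] x) = T^[n - m] x := by
  rw [← Nat.add_sub_cancel' hmn, Function.iterate_add_apply, Nat.add_sub_cancel_left]
  exact (T ^ m).symm_apply_apply _

theorem iterate_symm_iterate (T : Equiv.Perm α) {m n : ℕ} (hmn : m ≤ n) (x : α) :
    T^[m] (T.symm^[n] x) = T.symm^[n - m] x :=
  symm_iterate_iterate T.symm hmn x

/-- The least `n ≥ 0` with `f^[n] x ∈ J`, with junk value `0` if the orbit of `x` misses `J`. -/
noncomputable def hitTime (f : α → α) (J : Set α) (x : α) : ℕ := sInf {n | f^[n] x ∈ J}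

theorem iterate_hitTime_mem {f : α → α} (h : ∃ n, f^[n] x ∈ J) : f^[hitTime f J x] x ∈ J :=
  Nat.sInf_mem h

theorem iterate_notMem_of_lt_hitTime {f : α → α} {n : ℕ} (hn : n < hitTime f J x) :
    f^[n] x ∉ J :=
  Nat.notMem_of_lt_sInf hn

theorem hitTime_eq {f : α → α} {n : ℕ} (hn : f^[n] x ∈ J) (hlt : ∀ m < n, f^[m] x ∉ J) :
    hitTime f J x = n :=
  IsLeast.csInf_eq ⟨hn, fun _ hm => not_lt.1 fun h => hlt _ h hm⟩

/-- The least `n > 0` with `f^[n] x ∈ J`, with junk value `0` if there is none. -/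
noncomputable def returnTime (f : α → α) (J : Set α) (x : α) : ℕ :=
  sInf {n | 0 < n ∧ f^[n] x ∈ J}

theorem returnTime_eq {f : α → α} {n : ℕ} (hpos : 0 < n) (hn : f^[n] x ∈ J)
    (hlt : ∀ m, 0 < m → m < n → f^[m] x ∉ J) : returnTime f J x = n :=
  IsLeast.csInf_eq ⟨⟨hpos, hn⟩, fun _ hm => not_lt.1 fun h => hlt _ hm.1 h hm.2⟩

theorem returnTime_pos_and_iterate_mem {f : α → α} (h : ∃ n > 0, f^[n] x ∈ J) :
    0 < returnTime f J x ∧ f^[returnTime f J x] x ∈ J :=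
  Nat.sInf_mem h

theorem iterate_notMem_of_lt_returnTime {f : α → α} {n : ℕ} (hpos : 0 < n)
    (hn : n < returnTime f J x) : f^[n] x ∉ J := fun h =>
  Nat.notMem_of_lt_sInf hn ⟨hpos, h⟩

/-- The points of `J` above which the Kakutani tower of first return to `J` meets `E`. -/
def towerBase (T : Equiv.Perm α) (J E : Set α) : Set α :=
  {u ∈ J | ∃ n, T^[n] u ∈ E ∧ ∀ m, 0 < m → m ≤ n → T^[m] u ∉ J}

theorem towerBase_subset_image :
    towerBase T J E ⊆ (fun e => T.symm^[hitTime T.symm J e] e) '' E := by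
  rintro u ⟨hu, n, hn, hno⟩
  have hhit : hitTime T.symm J (T^[n] u) = n := by
    refine hitTime_eq ?_ fun m hm => ?_
    · rwa [symm_iterate_iterate T le_rfl, Nat.sub_self]
    · rw [symm_iterate_iterate T hm.le]
      exact hno _ (by lia) (by lia)
  exact ⟨T^[n] u, hn, by simp [hhit, symm_iterate_iterate T le_rfl]⟩

theorem image_subset_towerBase (h : ∀ e ∈ E, ∃ n, T.symm^[n] e ∈ J) :
    (fun e => T.symm^[hitTime T.symm J e] e) '' E ⊆ towerBase T J E := by
  rintro _ ⟨e, he, rfl⟩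
  refine ⟨iterate_hitTime_mem (h e he), hitTime T.symm J e, ?_, fun n hpos hn => ?_⟩
  · simpa only [iterate_symm_iterate T le_rfl, Nat.sub_self, Function.iterate_zero_apply] using he
  · simpa only [iterate_symm_iterate T hn] using
      iterate_notMem_of_lt_hitTime (Nat.sub_lt_self hpos hn)

theorem finite_towerBase (hE : E.Finite) : (towerBase T J E).Finite :=
  (hE.image _).subset towerBase_subset_image

theorem eq_of_symm_iterate_eq (hE : ∀ e ∈ E, ∀ n > 0, T^[n] e ∉ E) {e e' : α} (he : e ∈ E)
    (he' : e' ∈ E) {m n : ℕ} (h : T.symm^[m] e = T.symm^[n] e') : e = e' := by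
  wlog hmn : m ≤ n generalizing e e' m n
  · exact (this he' he h.symm (le_of_not_ge hmn)).symm
  have heq : T^[n - m] e = e' := by
    have he'_eq : T^[n] (T.symm^[n] e') = e' := (T ^ n).apply_symm_apply e'
    have he_eq : T^[m] (T.symm^[m] e) = e := (T ^ m).apply_symm_apply e
    rw [← he'_eq, ← h, ← Nat.sub_add_cancel hmn, Function.iterate_add_apply, he_eq,
      Nat.add_sub_cancel]
  obtain h0 | hpos := (n - m).eq_zero_or_pos
  · rwa [h0] at heq
  · exact absurd (heq ▸ he') (hE e he _ hpos)

theorem ncard_towerBase (hE : ∀ e ∈ E, ∀ n > 0, T^[n] e ∉ E)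
    (hhit : ∀ e ∈ E, ∃ n, T.symm^[n] e ∈ J) : (towerBase T J E).ncard = E.ncard := by
  rw [towerBase_subset_image.antisymm (image_subset_towerBase hhit)]
  exact InjOn.ncard_image fun _ he _ he' h => eq_of_symm_iterate_eq hE he he' h

theorem exists_iterate_apply_mem_iff (hJ : ∀ y ∈ J, ∃ n > 0, T^[n] y ∈ J) :
    (∃ n, T^[n] (T x) ∈ J) ↔ ∃ n, T^[n] x ∈ J := by
  refine ⟨fun ⟨n, hn⟩ => ⟨n + 1, hn⟩, fun ⟨n, hn⟩ => ?_⟩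
  obtain ⟨m, hm, hmJ⟩ := hJ _ hn
  rw [← Function.iterate_add_apply] at hmJ
  exact ⟨m + n - 1, by rwa [← Function.iterate_succ_apply, Nat.succ_eq_add_one,
    Nat.sub_add_cancel (by lia)]⟩

theorem exists_lt_iterate_mem {N : ℕ} (hN : ∀ y ∈ J, ∃ n > 0, n ≤ N ∧ T.symm^[n] y ∈ J)
    (h : ∃ n, T^[n] x ∈ J) : ∃ n < N, T^[n] x ∈ J := by
  have hfirst := iterate_hitTime_mem h
  refine ⟨hitTime T J x, not_le.1 fun hle => ?_, hfirst⟩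
  obtain ⟨n, hpos, hn, hmem⟩ := hN _ hfirst
  rw [symm_iterate_iterate T (hn.trans hle)] at hmem
  exact iterate_notMem_of_lt_hitTime (Nat.sub_lt_self hpos (hn.trans hle)) hmem

end Hitting

section Separation

variable {α : Type*} [LinearOrder α] {F G : Set α} {x y z : α}

/-- No point of `F` separates `x` from `y`: the two points lie in the same piece of the partition
of the line into half-open intervals `[d, d')` with endpoints in `F`. -/
def Unseparated (F : Set α) (x y : α) : Prop := ∀ d ∈ F, (d ≤ x ↔ d ≤ y)

theorem Unseparated.refl (F : Set α) (x : α) : Unseparated F x x := fun _ _ => Iff.rfl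

theorem Unseparated.symm (h : Unseparated F x y) : Unseparated F y x := fun d hd => (h d hd).symm

theorem Unseparated.trans (h : Unseparated F x y) (h' : Unseparated F y z) : Unseparated F x z :=
  fun d hd => (h d hd).trans (h' d hd)

theorem Unseparated.mono (h : Unseparated F x y) (hGF : G ⊆ F) : Unseparated G x y :=
  fun d hd => h d (hGF hd)

theorem Unseparated.mem_Ico_iff {a b : α} (h : Unseparated F x y) (ha : a ∈ F) (hb : b ∈ F) :
    x ∈ Ico a b ↔ y ∈ Ico a b := by
  rw [mem_Ico, mem_Ico, h a ha, ← not_le, ← not_le, h b hb]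

theorem Unseparated.of_mem_uIcc (h : Unseparated F x y) (hz : z ∈ uIcc x y) :
    Unseparated F x z := fun d hd => by
  have hiff := h d hd
  obtain ⟨h1, h2⟩ | ⟨h1, h2⟩ := mem_uIcc.1 hz <;> grind

theorem Unseparated.of_forall_mem_uIcc (h : ∀ d ∈ F, d ∈ uIcc x y → (d ≤ x ↔ d ≤ y)) :
    Unseparated F x y := fun d hd => by
  by_cases hmem : d ∈ uIcc x y
  · exact h d hd hmem
  · rw [mem_uIcc] at hmem
    grind

theorem exists_mem_unseparated (hF : F.Finite) (h : ∃ d ∈ F, d ≤ y) :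
    ∃ c ∈ F, Unseparated F c y := by
  obtain ⟨c, ⟨hcF, hcy⟩, hmax⟩ := exists_max_image (F ∩ Iic y) id (hF.inter_of_left _) h
  exact ⟨c, hcF, fun d hd => ⟨fun hdc => hdc.trans hcy, fun hdy => hmax d ⟨hd, hdy⟩⟩⟩

theorem ncard_image_of_eq_iff_unseparated {β : Type*} {f : α → β} {O Y : Set α} (hY : Y.Finite)
    (hf : ∀ x ∈ O, ∀ y ∈ O, f x = f y ↔ Unseparated Y x y)
    (hleft : ∃ b ∈ O, ∀ u ∈ Y, b < u) (hdense : ∀ u ∈ Y, ∃ z ∈ O, Unseparated Y u z) :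
    (f '' O).Finite ∧ (f '' O).ncard = Y.ncard + 1 := by
  obtain ⟨b, hbO, hb⟩ := hleft
  have hrep : ∀ p ∈ insert b Y, ∃ z ∈ O, Unseparated Y p z := by
    rintro p (rfl | hp)
    exacts [⟨p, hbO, .refl Y p⟩, hdense p hp]
  choose! ρ hρO hρ using hrep
  have himage : f '' O = (f ∘ ρ) '' insert b Y := by
    refine Subset.antisymm ?_ (image_subset_iff.2 fun p hp => mem_image_of_mem f (hρO p hp))
    rintro _ ⟨z, hz, rfl⟩
    obtain ⟨p, hp, hpz⟩ : ∃ p ∈ insert b Y, Unseparated Y p z := by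
      by_cases hne : ∃ u ∈ Y, u ≤ z
      · obtain ⟨c, hcY, hcz⟩ := exists_mem_unseparated hY hne
        exact ⟨c, Or.inr hcY, hcz⟩
      · exact ⟨b, mem_insert _ _, fun u hu =>
          iff_of_false (hb u hu).not_ge fun huz => hne ⟨u, hu, huz⟩⟩
    exact ⟨p, hp, (hf _ (hρO p hp) z hz).2 ((hρ p hp).symm.trans hpz)⟩
  have hinj : InjOn (f ∘ ρ) (insert b Y) := by
    intro p hp q hq hpq
    have hsep : Unseparated Y p q :=
      (hρ p hp).trans (((hf _ (hρO p hp) _ (hρO q hq)).1 hpq).trans (hρ q hq).symm)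
    obtain rfl | hpY := hp <;> obtain rfl | hqY := hq
    · rfl
    · exact absurd ((hsep q hqY).2 le_rfl) (hb q hqY).not_ge
    · exact absurd ((hsep p hpY).1 le_rfl) (hb p hpY).not_ge
    · exact ((hsep p hpY).1 le_rfl).antisymm ((hsep q hqY).2 le_rfl)
  rw [himage]
  exact ⟨(hY.insert b).image _, by
    rw [hinj.ncard_image, ncard_insert_of_notMem (fun h => (hb b h).false) hY]⟩

variable [TopologicalSpace α] [OrderTopology α]

theorem eventually_unseparated (hF : F.Finite) (hx : x ∉ F) :
    ∀ᶠ y in 𝓝 x, Unseparated F x y := by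
  refine (eventually_all_finite hF).2 fun d hd => ?_
  obtain hdx | hxd := (ne_of_mem_of_not_mem hd hx).lt_or_gt
  · filter_upwards [lt_mem_nhds hdx] with y hy using iff_of_true hdx.le hy.le
  · filter_upwards [gt_mem_nhds hxd] with y hy using iff_of_false hxd.not_ge hy.not_ge

theorem eventually_unseparated_nhdsGE (hF : F.Finite) (x : α) :
    ∀ᶠ y in 𝓝[≥] x, Unseparated F x y := by
  refine (eventually_all_finite hF).2 fun d _ => ?_
  obtain hdx | hxd := le_or_gt d x
  · filter_upwards [self_mem_nhdsWithin] with y hy using iff_of_true hdx (hdx.trans hy)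
  · filter_upwards [nhdsWithin_le_nhds (gt_mem_nhds hxd)] with y hy using
      iff_of_false hxd.not_ge hy.not_ge

end Separation

theorem inter_frontier_nonempty_of_isPreconnected {α : Type*} [TopologicalSpace α] {s A : Set α}
    (hs : IsPreconnected s) (hA : (s ∩ A).Nonempty) (hAc : ¬ s ⊆ A) :
    (s ∩ frontier A).Nonempty := by
  rw [frontier_eq_closure_inter_closure]
  refine isPreconnected_closed_iff.1 hs _ _ isClosed_closure isClosed_closure (fun y _ => ?_)
    (hA.mono (inter_subset_inter_right s subset_closure)) ?_
  · exact (em (y ∈ A)).imp (fun h => subset_closure h) fun h => subset_closure h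
  · obtain ⟨y, hy, hyA⟩ := not_subset.1 hAc
    exact ⟨y, hy, subset_closure hyA⟩

theorem apply_mem_frontier_of_continuousAt {α : Type*} [TopologicalSpace α] {f : α → α} {A : Set α}
    {x : α} (hf : ContinuousAt f x) (hA : f ⁻¹' A = A) (hx : x ∈ frontier A) :
    f x ∈ frontier A := by
  rw [frontier_eq_closure_inter_closure] at hx ⊢
  have hAc : f ⁻¹' Aᶜ = Aᶜ := by rw [preimage_compl, hA]
  exact ⟨closure_mono (image_subset_iff.2 hA.ge) (mem_closure_image hf hx.1),
    closure_mono (image_subset_iff.2 hAc.ge) (mem_closure_image hf hx.2)⟩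

theorem exists_lt_abs_sub_lt_of_bounded {u : ℕ → ℝ} (hu : ∀ n, u n ∈ Icc (0 : ℝ) 1) {ε : ℝ}
    (hε : 0 < ε) : ∃ m n, m < n ∧ |u m - u n| < ε := by
  obtain ⟨_, _, φ, hφ, hlim⟩ := isCompact_Icc.tendsto_subseq hu
  obtain ⟨N, hN⟩ := Metric.cauchySeq_iff'.1 hlim.cauchySeq ε hε
  refine ⟨φ N, φ (N + 1), hφ N.lt_succ_self, ?_⟩
  rw [abs_sub_comm]
  exact hN (N + 1) N.le_succ

section Itinerary

variable {T : Equiv.Perm ℝ} {D : Finset ℝ} {m n : ℕ} {x y z : ℝ}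

/-- The orbits of `x` and `y` visit the same pieces of the partition cut out by `D` at the times
`0, …, m - 1`. -/
def SameItinerary (T : ℝ → ℝ) (D : Finset ℝ) (m : ℕ) (x y : ℝ) : Prop :=
  ∀ n < m, Unseparated (D : Set ℝ) (T^[n] x) (T^[n] y)

theorem SameItinerary.symm (h : SameItinerary T D m x y) : SameItinerary T D m y x :=
  fun n hn => (h n hn).symm

theorem SameItinerary.trans (h : SameItinerary T D m x y) (h' : SameItinerary T D m y z) :
    SameItinerary T D m x z :=
  fun n hn => (h n hn).trans (h' n hn)

theorem SameItinerary.mono (h : SameItinerary T D m x y) (hnm : n ≤ m) : SameItinerary T D n x y :=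
  fun l hl => h l (hl.trans_le hnm)

theorem SameItinerary.succ (h : SameItinerary T D m x y)
    (hm : Unseparated (D : Set ℝ) (T^[m] x) (T^[m] y)) : SameItinerary T D (m + 1) x y := by
  intro n hn
  obtain hlt | rfl := Nat.lt_succ_iff_lt_or_eq.1 hn
  exacts [h n hlt, hm]

theorem SameItinerary.iterate (h : SameItinerary T D (m + n) x y) :
    SameItinerary T D n (T^[m] x) (T^[m] y) := fun l hl => by
  rw [← Function.iterate_add_apply, ← Function.iterate_add_apply]
  exact h _ (by lia)

theorem SameItinerary.add (h : SameItinerary T D m x y)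
    (h' : SameItinerary T D n (T^[m] x) (T^[m] y)) : SameItinerary T D (m + n) x y := by
  intro l hl
  obtain hlt | hle := lt_or_ge l m
  · exact h l hlt
  · have hsub := h' (l - m) (by lia)
    rwa [← Function.iterate_add_apply, ← Function.iterate_add_apply, Nat.sub_add_cancel hle] at hsub

/-- The points of `[0, 1)` whose orbit meets `D` before time `m`; they delimit the intervals on
which the itinerary of length `m` is constant. -/
def cuts (T : ℝ → ℝ) (D : Finset ℝ) (m : ℕ) : Set ℝ :=
  {z ∈ Ico (0 : ℝ) 1 | ∃ n < m, T^[n] z ∈ D}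

theorem cuts_mono (hnm : n ≤ m) : cuts T D n ⊆ cuts T D m :=
  fun _ ⟨hz, l, hl, hlD⟩ => ⟨hz, l, hl.trans_le hnm, hlD⟩

theorem finite_preimage_iterate (T : Equiv.Perm ℝ) (D : Finset ℝ) (n : ℕ) :
    (T^[n] ⁻¹' (D : Set ℝ)).Finite :=
  D.finite_toSet.preimage (T ^ n).injective.injOn

theorem finite_cuts (T : Equiv.Perm ℝ) (D : Finset ℝ) (m : ℕ) : (cuts T D m).Finite := by
  refine ((finite_lt_nat m).biUnion fun n _ => finite_preimage_iterate T D n).subset ?_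
  rintro z ⟨-, n, hn, hnD⟩
  exact mem_biUnion (x := n) hn hnD

/-- `T` preserves `[0, 1)` and acts as a translation on each of the half-open intervals into which
`D` cuts it. -/
structure IsPiecewiseTranslation (T : Equiv.Perm ℝ) (D : Finset ℝ) : Prop where
  apply_mem_iff : ∀ x, T x ∈ Ico (0 : ℝ) 1 ↔ x ∈ Ico (0 : ℝ) 1
  apply_sub_apply : ∀ x ∈ Ico (0 : ℝ) 1, ∀ y ∈ Ico (0 : ℝ) 1,
    Unseparated (D : Set ℝ) x y → T y - T x = y - x

namespace IsPiecewiseTranslation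

theorem mono (h : IsPiecewiseTranslation T D) {D' : Finset ℝ} (hD : D ⊆ D') :
    IsPiecewiseTranslation T D' where
  apply_mem_iff := h.apply_mem_iff
  apply_sub_apply x hx y hy hxy := h.apply_sub_apply x hx y hy (hxy.mono (mod_cast hD))

variable (h : IsPiecewiseTranslation T D)
include h

theorem iterate_mem (hx : x ∈ Ico (0 : ℝ) 1) (n : ℕ) : T^[n] x ∈ Ico (0 : ℝ) 1 :=
  MapsTo.iterate (fun y => (h.apply_mem_iff y).2) n hx

theorem iterate_sub_iterate (hx : x ∈ Ico (0 : ℝ) 1) (hy : y ∈ Ico (0 : ℝ) 1)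
    (hxy : SameItinerary T D m x y) : T^[m] y - T^[m] x = y - x := by
  induction m with
  | zero => rfl
  | succ m ih =>
    rw [Function.iterate_succ_apply', Function.iterate_succ_apply', ← ih (hxy.mono m.le_succ)]
    exact h.apply_sub_apply _ (h.iterate_mem hx m) _ (h.iterate_mem hy m) (hxy m m.lt_succ_self)

theorem iterate_le_iterate_iff (hx : x ∈ Ico (0 : ℝ) 1) (hy : y ∈ Ico (0 : ℝ) 1)
    (hxy : SameItinerary T D m x y) : T^[m] x ≤ T^[m] y ↔ x ≤ y := by
  rw [← sub_nonneg, h.iterate_sub_iterate hx hy hxy, sub_nonneg]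

theorem sameItinerary_of_mem_uIcc (hx : x ∈ Ico (0 : ℝ) 1) (hy : y ∈ Ico (0 : ℝ) 1)
    (hxy : SameItinerary T D m x y) (hz : z ∈ uIcc x y) : SameItinerary T D m x z := by
  have hzI : z ∈ Ico (0 : ℝ) 1 := ordConnected_Ico.uIcc_subset hx hy hz
  induction m with
  | zero => exact fun n hn => absurd hn n.not_lt_zero
  | succ m ih =>
    have hxy' := hxy.mono m.le_succ
    have hxz := ih hxy'
    refine hxz.succ ((hxy m m.lt_succ_self).of_mem_uIcc ?_)
    have hzy : SameItinerary T D m z y := hxz.symm.trans hxy'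
    rw [mem_uIcc] at hz ⊢
    rwa [h.iterate_le_iterate_iff hx hzI hxz, h.iterate_le_iterate_iff hzI hy hzy,
      h.iterate_le_iterate_iff hy hzI hzy.symm, h.iterate_le_iterate_iff hzI hx hxz.symm]

/-- A point of `D` separating `T^[m] x` from `T^[m] y` is pulled back by the translation `T^[m]` to
a point between `x` and `y`. -/
theorem sameItinerary_succ (hx : x ∈ Ico (0 : ℝ) 1) (hy : y ∈ Ico (0 : ℝ) 1)
    (hxy : SameItinerary T D m x y)
    (hD : ∀ z ∈ uIcc x y, SameItinerary T D m x z → T^[m] z ∈ D → (z ≤ x ↔ z ≤ y)) :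
    SameItinerary T D (m + 1) x y := by
  refine hxy.succ (.of_forall_mem_uIcc fun d hd hdmem => ?_)
  obtain ⟨z, rfl⟩ : ∃ z, T^[m] x + (z - x) = d := ⟨x + (d - T^[m] x), by ring⟩
  have hxy_sub := h.iterate_sub_iterate hx hy hxy
  have hz : z ∈ uIcc x y := by
    rw [mem_uIcc] at hdmem ⊢
    exact hdmem.imp (fun ⟨_, _⟩ => ⟨by linarith, by linarith⟩)
      fun ⟨_, _⟩ => ⟨by linarith, by linarith⟩
  have hxz := h.sameItinerary_of_mem_uIcc hx hy hxy hz
  have hxz_sub := h.iterate_sub_iterate hx (ordConnected_Ico.uIcc_subset hx hy hz) hxz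
  have hzx_iff : T^[m] x + (z - x) ≤ T^[m] x ↔ z ≤ x := by constructor <;> intro <;> linarith
  have hzy_iff : T^[m] x + (z - x) ≤ T^[m] y ↔ z ≤ y := by constructor <;> intro <;> linarith
  rw [hzx_iff, hzy_iff]
  refine hD z hz hxz ?_
  rwa [← hxz_sub, add_sub_cancel] at hd

theorem sameItinerary_iff_unseparated_cuts (hx : x ∈ Ico (0 : ℝ) 1) (hy : y ∈ Ico (0 : ℝ) 1) :
    SameItinerary T D m x y ↔ Unseparated (cuts T D m) x y := by
  constructor
  · refine fun hxy => .of_forall_mem_uIcc fun z ⟨hzI, n, hn, hnD⟩ hz => ?_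
    have hxy' := hxy.mono hn.le
    have hxz := h.sameItinerary_of_mem_uIcc hx hy hxy' hz
    rw [← h.iterate_le_iterate_iff hzI hx hxz.symm,
      ← h.iterate_le_iterate_iff hzI hy (hxz.symm.trans hxy')]
    exact hxy n hn _ hnD
  · intro hsep
    induction m with
    | zero => exact fun n hn => absurd hn n.not_lt_zero
    | succ m ih =>
      refine h.sameItinerary_succ hx hy (ih (hsep.mono (cuts_mono m.le_succ))) fun z hz _ hzD => ?_
      exact hsep z ⟨ordConnected_Ico.uIcc_subset hx hy hz, m, m.lt_succ_self, hzD⟩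

theorem eventually_sameItinerary_nhdsGE (hx : x ∈ Ico (0 : ℝ) 1) (m : ℕ) :
    ∀ᶠ y in 𝓝[≥] x, y ∈ Ico (0 : ℝ) 1 ∧ SameItinerary T D m x y := by
  filter_upwards [Ico_mem_nhdsGE_of_mem hx, eventually_unseparated_nhdsGE (finite_cuts T D m) x]
    with y hy hxy using ⟨hy, (h.sameItinerary_iff_unseparated_cuts hx hy).2 hxy⟩

theorem eventually_sameItinerary (hx : x ∈ Ioo (0 : ℝ) 1) (hxm : x ∉ cuts T D m) :
    ∀ᶠ y in 𝓝 x, y ∈ Ico (0 : ℝ) 1 ∧ SameItinerary T D m x y := by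
  filter_upwards [Ioo_mem_nhds hx.1 hx.2, eventually_unseparated (finite_cuts T D m) hxm]
    with y hy hxy
  exact ⟨Ioo_subset_Ico_self hy, (h.sameItinerary_iff_unseparated_cuts (Ioo_subset_Ico_self hx)
    (Ioo_subset_Ico_self hy)).2 hxy⟩

theorem continuousAt (hx : x ∈ Ioo (0 : ℝ) 1) (hxD : x ∉ D) : ContinuousAt T x := by
  refine ContinuousAt.congr (f := fun y => y + (T x - x)) (by fun_prop) ?_
  filter_upwards [Ioo_mem_nhds hx.1 hx.2, eventually_unseparated D.finite_toSet hxD] with y hy hxy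
  linarith [h.apply_sub_apply x (Ioo_subset_Ico_self hx) y (Ioo_subset_Ico_self hy) hxy]

/-- The largest cut to the left of a periodic point (or `0`) moves along with it, hence is itself
periodic. -/
theorem iterate_ne_self (hD : ∀ d ∈ insert 0 D, ∀ n > 0, T^[n] d ≠ d) (hx : x ∈ Ico (0 : ℝ) 1)
    (hn : 0 < n) : T^[n] x ≠ x := by
  intro hper
  obtain ⟨c, hc, hsep⟩ := exists_mem_unseparated ((finite_cuts T D n).insert 0)
    ⟨0, mem_insert _ _, hx.1⟩
  have hcI : c ∈ Ico (0 : ℝ) 1 := by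
    obtain rfl | hc := hc
    exacts [⟨le_rfl, one_pos⟩, hc.1]
  have hc_per : T^[n] c = c := by
    have hitin := (h.sameItinerary_iff_unseparated_cuts hcI hx).2 (hsep.mono (subset_insert _ _))
    linarith [h.iterate_sub_iterate hcI hx hitin]
  obtain rfl | ⟨-, m, -, hmD⟩ := hc
  · exact hD 0 (Finset.mem_insert_self _ _) n hn hc_per
  · refine hD _ (Finset.mem_insert_of_mem hmD) n hn ?_
    rw [← Function.iterate_add_apply, add_comm, Function.iterate_add_apply, hc_per]

end IsPiecewiseTranslation

end Itinerary

section Return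

variable {T : Equiv.Perm ℝ} {D : Finset ℝ} {J : Set ℝ} {L n : ℕ} {x y : ℝ}

/-- `J` is an interval of `[0, 1)` that is a union of classes of points with the same itinerary of
length `L`. -/
structure IsItineraryInterval (T : ℝ → ℝ) (D : Finset ℝ) (L : ℕ) (J : Set ℝ) : Prop where
  subset_Ico : J ⊆ Ico 0 1
  ordConnected : J.OrdConnected
  mem_of_sameItinerary : ∀ x ∈ J, ∀ y ∈ Ico (0 : ℝ) 1, SameItinerary T D L x y → y ∈ J

theorem finite_towerBase_preimage (T : Equiv.Perm ℝ) (D : Finset ℝ) (J : Set ℝ) (L : ℕ) :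
    (towerBase T J (T^[L] ⁻¹' D)).Finite :=
  finite_towerBase (finite_preimage_iterate T D L)

theorem isItineraryInterval_Ico {a b : ℝ} (ha : a ∈ D) (hb : b ∈ D) (ha0 : 0 ≤ a) (hb1 : b ≤ 1) :
    IsItineraryInterval T D 1 (Ico a b) where
  subset_Ico := Ico_subset_Ico ha0 hb1
  ordConnected := ordConnected_Ico
  mem_of_sameItinerary _ hx _ _ hxy :=
    ((hxy 0 one_pos).mem_Ico_iff (by simpa using ha) (by simpa using hb)).1 hx

namespace IsPiecewiseTranslation

variable (h : IsPiecewiseTranslation T D)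
include h

theorem isItineraryInterval_setOf_sameItinerary (x : ℝ) (L : ℕ) :
    IsItineraryInterval T D L {y ∈ Ico (0 : ℝ) 1 | SameItinerary T D L x y} where
  subset_Ico _ hy := hy.1
  ordConnected := ⟨fun _ hy _ hz _ hw => by
    refine ⟨ordConnected_Ico.out hy.1 hz.1 hw, hy.2.trans ?_⟩
    exact h.sameItinerary_of_mem_uIcc hy.1 hz.1 (hy.2.symm.trans hz.2) (Icc_subset_uIcc hw)⟩
  mem_of_sameItinerary _ hy _ hz hyz := ⟨hz, hy.2.trans hyz⟩

theorem iterate_mem_iff_of_sameItinerary (hJ : IsItineraryInterval T D L J)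
    (hx : x ∈ Ico (0 : ℝ) 1) (hy : y ∈ Ico (0 : ℝ) 1) (hxy : SameItinerary T D (n + L) x y) :
    T^[n] x ∈ J ↔ T^[n] y ∈ J :=
  ⟨fun hmem => hJ.mem_of_sameItinerary _ hmem _ (h.iterate_mem hy n) hxy.iterate,
    fun hmem => hJ.mem_of_sameItinerary _ hmem _ (h.iterate_mem hx n) hxy.iterate.symm⟩

/-- A point where the itinerary first changes at time `n + L` has a point of `T^{-L} D` above it at
height `n`, below the first return: it belongs to the tower base. -/
theorem sameItinerary_add_of_unseparated_towerBase (hJ : IsItineraryInterval T D L J)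
    (hx : x ∈ J) (hy : y ∈ J) (hxy : SameItinerary T D L x y)
    (hsep : Unseparated (towerBase T J (T^[L] ⁻¹' D)) x y)
    (hno : ∀ m, 0 < m → m < n → T^[m] x ∉ J) : SameItinerary T D (n + L) x y := by
  have hxI := hJ.subset_Ico hx
  have hyI := hJ.subset_Ico hy
  induction n with
  | zero => rwa [Nat.zero_add]
  | succ n ih =>
    have hxy' := ih fun m hm hmn => hno m hm (hmn.trans n.lt_succ_self)
    rw [Nat.succ_add]
    refine h.sameItinerary_succ hxI hyI hxy' fun z hz hxz hzD => hsep z ⟨?_, n, ?_, ?_⟩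
    · exact hJ.ordConnected.uIcc_subset hx hy hz
    · rwa [add_comm, Function.iterate_add_apply] at hzD
    · intro m hm hmn hmem
      have hzI := hJ.subset_Ico (hJ.ordConnected.uIcc_subset hx hy hz)
      exact hno m hm (by lia)
        ((h.iterate_mem_iff_of_sameItinerary hJ hxI hzI (hxz.mono (by lia))).2 hmem)

theorem itineraryInterval_mem_nhdsGE (hJ : IsItineraryInterval T D L J) (hx : x ∈ J) :
    J ∈ 𝓝[≥] x := by
  filter_upwards [h.eventually_sameItinerary_nhdsGE (hJ.subset_Ico hx) L] with y hy
  exact hJ.mem_of_sameItinerary x hx y hy.1 hy.2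

theorem eventually_sameItinerary_of_forall_iterate_notMem (hJ : IsItineraryInterval T D L J)
    (hx : x ∈ J) (hno : ∀ n > 0, T^[n] x ∉ J) :
    ∀ᶠ y in 𝓝[≥] x, y ∈ J ∧ ∀ n, SameItinerary T D n x y := by
  filter_upwards [h.eventually_sameItinerary_nhdsGE (hJ.subset_Ico hx) L,
    h.itineraryInterval_mem_nhdsGE hJ hx,
    eventually_unseparated_nhdsGE (finite_towerBase_preimage T D J L) x] with y ⟨_, hxy⟩ hy hsep
  refine ⟨hy, fun n => SameItinerary.mono ?_ (n.le_add_right L)⟩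
  exact h.sameItinerary_add_of_unseparated_towerBase hJ hx hy hxy hsep fun m hm _ => hno m hm

/-- If `x` never returned, all points of `J` slightly to the right of `x` would follow the orbit of
`x` rigidly for ever and never return either; but the orbit of `x` comes arbitrarily close to
itself. -/
theorem exists_iterate_mem (hJ : IsItineraryInterval T D L J) (hx : x ∈ J) :
    ∃ n > 0, T^[n] x ∈ J := by
  by_contra! hno
  have hxI := hJ.subset_Ico hx
  obtain ⟨u, hxu, hu⟩ := mem_nhdsGE_iff_exists_Ico_subset.1
    (h.eventually_sameItinerary_of_forall_iterate_notMem hJ hx hno)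
  have hshift : ∀ y ∈ Ico x u, ∀ n, T^[n] y = T^[n] x + (y - x) := fun y hy n => by
    linarith [h.iterate_sub_iterate hxI (hJ.subset_Ico (hu hy).1) ((hu hy).2 n)]
  obtain ⟨m, n, hmn, hclose⟩ := exists_lt_abs_sub_lt_of_bounded
    (fun n => Ico_subset_Icc_self (h.iterate_mem hxI n)) (sub_pos.2 hxu)
  obtain ⟨hlt_right, hlt_left⟩ := abs_lt.1 hclose
  have hcancel : ∀ y z, T^[m] y = T^[n] z → T^[n - m] z = y := fun y z hyz => by
    refine (T ^ m).injective (?_ : T^[m] _ = T^[m] y)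
    rw [← Function.iterate_add_apply, Nat.add_sub_cancel' hmn.le, hyz]
  obtain hle | hle := le_total (T^[m] x) (T^[n] x)
  · have hy : x + (T^[n] x - T^[m] x) ∈ Ico x u := ⟨by linarith, by linarith⟩
    refine hno (n - m) (Nat.sub_pos_of_lt hmn) ?_
    rw [hcancel _ x (by rw [hshift _ hy]; ring)]
    exact (hu hy).1
  · have hy : x + (T^[m] x - T^[n] x) ∈ Ico x u := ⟨by linarith, by linarith⟩
    refine hno (n - m) (Nat.sub_pos_of_lt hmn) ?_
    rw [h.iterate_mem_iff_of_sameItinerary hJ hxI (hJ.subset_Ico (hu hy).1) ((hu hy).2 _),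
      hcancel x _ (by rw [hshift _ hy]; ring)]
    exact hx

theorem exists_bound_iterate_mem {a b : ℝ} (ha : 0 ≤ a) (hb : b ≤ 1) :
    ∃ N, ∀ x ∈ Ico a b, ∃ n > 0, n ≤ N ∧ T^[n] x ∈ Ico a b := by
  classical
  set E : Finset ℝ := D ∪ {a, b} with hE
  have haE : a ∈ E := by simp [hE]
  have hbE : b ∈ E := by simp [hE]
  have hPT : IsPiecewiseTranslation T E := h.mono Finset.subset_union_left
  have hJ : IsItineraryInterval T E 1 (Ico a b) := isItineraryInterval_Ico haE hbE ha hb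
  set F : Set ℝ := E ∪ towerBase T (Ico a b) (T^[1] ⁻¹' E)
  have hFfin : F.Finite := E.finite_toSet.union (finite_towerBase_preimage T E _ 1)
  obtain ⟨N, hN⟩ := (hFfin.image (returnTime T (Ico a b))).bddAbove
  refine ⟨N, fun x hx => ?_⟩
  obtain ⟨c, hcF, hsep⟩ := exists_mem_unseparated hFfin ⟨a, Or.inl haE, hx.1⟩
  have hc : c ∈ Ico a b := (hsep.mem_Ico_iff (Or.inl haE) (Or.inl hbE)).2 hx
  obtain ⟨hpos, hmem⟩ := returnTime_pos_and_iterate_mem (hPT.exists_iterate_mem hJ hc)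
  refine ⟨_, hpos, hN (mem_image_of_mem _ hcF), ?_⟩
  have hinit : SameItinerary T E 1 c x := fun n hn => by
    obtain rfl := Nat.lt_one_iff.1 hn
    exact hsep.mono subset_union_left
  refine (hPT.iterate_mem_iff_of_sameItinerary hJ (hJ.subset_Ico hc) (hJ.subset_Ico hx) ?_).1 hmem
  exact hPT.sameItinerary_add_of_unseparated_towerBase hJ hc hx hinit (hsep.mono subset_union_right)
    fun m hm hlt => iterate_notMem_of_lt_returnTime hm hlt

end IsPiecewiseTranslation

end Return

section Minimality

variable {T : Equiv.Perm ℝ} {D : Finset ℝ} {A : Set ℝ} {n : ℕ} {x a b : ℝ}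

namespace IsPiecewiseTranslation

variable (h : IsPiecewiseTranslation T D)
include h

/-- As long as it avoids `D`, the orbit of a frontier point stays in the frontier, because `T` is
continuous off `D`. -/
theorem exists_iterate_mem_of_mem_frontier (h0 : T.symm 0 ∈ D) (hA : T ⁻¹' A = A)
    (hfin : (frontier A ∩ Ioo 0 1).Finite) (hx : x ∈ frontier A ∩ Ioo 0 1)
    (hinj : Function.Injective fun n => T^[n] x) : ∃ n, T^[n] x ∈ D := by
  by_contra! hno
  have hmem : ∀ n, T^[n] x ∈ frontier A ∩ Ioo 0 1 := fun n => by
    induction n with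
    | zero => exact hx
    | succ n ih =>
      rw [Function.iterate_succ_apply']
      have hIco := (h.apply_mem_iff _).2 (Ioo_subset_Ico_self ih.2)
      have hne : T (T^[n] x) ≠ 0 := fun heq => hno n (by rwa [← T.symm_apply_eq.2 heq.symm])
      exact ⟨apply_mem_frontier_of_continuousAt (h.continuousAt ih.2 (hno n)) hA ih.1,
        hIco.1.lt_of_ne' hne, hIco.2⟩
  exact infinite_range_of_injective hinj (hfin.subset (range_subset_iff.2 hmem))

theorem finite_frontier_setOf_hits (a b : ℝ) (N : ℕ) :
    (frontier {x | ∃ n < N, T^[n] x ∈ Ico a b} ∩ Ioo 0 1).Finite := by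
  classical
  set E : Finset ℝ := D ∪ {a, b} with hE
  have hPT : IsPiecewiseTranslation T E := h.mono Finset.subset_union_left
  refine (finite_cuts T E N).subset fun p ⟨hfront, hp⟩ => by_contra fun hcut => ?_
  have hiff : ∀ᶠ y in 𝓝 p,
      ((∃ n < N, T^[n] p ∈ Ico a b) ↔ ∃ n < N, T^[n] y ∈ Ico a b) := by
    filter_upwards [hPT.eventually_sameItinerary hp hcut] with y hy
    exact exists_congr fun n => and_congr_right fun hn =>
      (hy.2 n hn).mem_Ico_iff (by simp [hE]) (by simp [hE])
  rw [frontier_eq_closure_inter_closure, mem_inter_iff, mem_closure_iff_frequently,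
    mem_closure_iff_frequently] at hfront
  obtain ⟨y, hy, hpy⟩ := (hfront.1.and_eventually hiff).exists
  obtain ⟨z, hz, hpz⟩ := (hfront.2.and_eventually hiff).exists
  exact hz (hpz.1 (hpy.2 hy))

end IsPiecewiseTranslation

/-- A piecewise translation satisfying Keane's condition: the forward orbits of the points of `D`
never meet `D` again. That `T` maps a point of `D` to `0` excludes only the trivial exchange of a
single interval; the inverse is a piecewise translation with respect to the images of the left
endpoints. -/
structure IsRegularExchange (T : Equiv.Perm ℝ) (D : Finset ℝ) : Prop
    extends IsPiecewiseTranslation T D where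
  subset_Ico : (D : Set ℝ) ⊆ Ico 0 1
  symm_zero_mem : T.symm 0 ∈ D
  iterate_notMem : ∀ d ∈ D, ∀ n > 0, T^[n] d ∉ D
  isPiecewiseTranslation_symm : IsPiecewiseTranslation T.symm ((insert 0 D).image T)

namespace IsRegularExchange

variable (h : IsRegularExchange T D)
include h

theorem iterate_zero_notMem (n : ℕ) : T^[n] 0 ∉ D := by
  have hnot := h.iterate_notMem _ h.symm_zero_mem (n + 1) n.succ_pos
  rwa [Function.iterate_succ_apply, T.apply_symm_apply] at hnot

theorem iterate_ne_self (hx : x ∈ Ico (0 : ℝ) 1) (hn : 0 < n) : T^[n] x ≠ x := by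
  refine h.toIsPiecewiseTranslation.iterate_ne_self (fun d hd m hm heq => ?_) hx hn
  obtain rfl | hd := Finset.mem_insert.1 hd
  · refine h.iterate_notMem _ h.symm_zero_mem m hm ?_
    have hcomm : T (T^[m] (T.symm 0)) = 0 := by
      rw [← Function.iterate_succ_apply' T, Function.iterate_succ_apply, T.apply_symm_apply, heq]
    rw [← T.symm_apply_eq.2 hcomm.symm]
    exact h.symm_zero_mem
  · exact h.iterate_notMem d hd m hm (heq.symm ▸ hd)

theorem injective_iterate (hx : x ∈ Ico (0 : ℝ) 1) : Function.Injective fun n => T^[n] x :=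
  Function.Injective.of_lt_imp_ne fun _ _ hlt heq =>
    h.iterate_ne_self hx (Nat.sub_pos_of_lt hlt) (Function.iterate_cancel T.injective heq.symm)

theorem injective_symm_iterate (hx : x ∈ Ico (0 : ℝ) 1) :
    Function.Injective fun n => T.symm^[n] x :=
  Function.Injective.of_lt_imp_ne fun m n hlt heq => by
    have hper : T.symm^[n - m] x = x := Function.iterate_cancel T.symm.injective heq.symm
    refine h.iterate_ne_self hx (Nat.sub_pos_of_lt hlt) ?_
    conv_lhs => rw [← hper]
    exact (T ^ (n - m)).apply_symm_apply x

/-- A frontier point would lie on an orbit segment leading from a discontinuity of the inverse of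
`T` to a discontinuity of `T`. -/
theorem frontier_inter_Ioo_eq_empty (hA : T ⁻¹' A = A) (hfin : (frontier A ∩ Ioo 0 1).Finite) :
    frontier A ∩ Ioo 0 1 = ∅ := by
  refine eq_empty_of_forall_notMem fun p hp => ?_
  have hpI := Ioo_subset_Ico_self hp.2
  have hA_symm : T.symm ⁻¹' A = A := by
    conv_lhs => rw [← hA]
    exact T.symm_preimage_preimage A
  obtain ⟨n, hn⟩ := h.exists_iterate_mem_of_mem_frontier h.symm_zero_mem hA hfin hp
    (h.injective_iterate hpI)
  obtain ⟨m, hm⟩ := h.isPiecewiseTranslation_symm.exists_iterate_mem_of_mem_frontier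
    (Finset.mem_image_of_mem T (Finset.mem_insert_self 0 D)) hA_symm hfin hp
    (h.injective_symm_iterate hpI)
  obtain ⟨d, hd, hdm⟩ := Finset.mem_image.1 hm
  have hp_eq : T^[m + 1] d = p := by
    rw [Function.iterate_succ_apply, hdm]
    exact (T ^ m).apply_symm_apply p
  rw [← hp_eq, ← Function.iterate_add_apply] at hn
  obtain rfl | hd := Finset.mem_insert.1 hd
  · exact h.iterate_zero_notMem _ hn
  · exact h.iterate_notMem d hd _ (by lia) hn

theorem exists_bound_hit_Ico (ha : 0 ≤ a) (hab : a < b) (hb : b ≤ 1) :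
    ∃ N, ∀ x ∈ Ico (0 : ℝ) 1, ∃ n < N, T^[n] x ∈ Ico a b := by
  obtain ⟨M, hM⟩ := h.exists_bound_iterate_mem ha hb
  obtain ⟨N, hN⟩ := h.isPiecewiseTranslation_symm.exists_bound_iterate_mem ha hb
  set A : Set ℝ := {x | ∃ n < N, T^[n] x ∈ Ico a b}
  have hA_mem : ∀ x, x ∈ A ↔ ∃ n, T^[n] x ∈ Ico a b := fun x =>
    ⟨fun ⟨n, _, hn⟩ => ⟨n, hn⟩, exists_lt_iterate_mem hN⟩
  have hA : T ⁻¹' A = A := by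
    ext x
    rw [mem_preimage, hA_mem, hA_mem]
    exact exists_iterate_apply_mem_iff fun y hy => (hM y hy).imp fun n hn => ⟨hn.1, hn.2.2⟩
  have hIoo : Ioo 0 1 ⊆ A := by
    by_contra hsub
    obtain ⟨c, hac, hcb⟩ := exists_between hab
    have hne : (Ioo 0 1 ∩ A).Nonempty :=
      ⟨c, ⟨ha.trans_lt hac, hcb.trans_le hb⟩, (hA_mem c).2 ⟨0, hac.le, hcb⟩⟩
    have hfront := inter_frontier_nonempty_of_isPreconnected isPreconnected_Ioo hne hsub
    rw [inter_comm, h.frontier_inter_Ioo_eq_empty hA (h.finite_frontier_setOf_hits a b N)] at hfront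
    exact not_nonempty_empty hfront
  refine ⟨N, fun x hx => ?_⟩
  obtain rfl | hx0 := hx.1.eq_or_lt
  · have hT0 := (h.apply_mem_iff 0).2 hx
    have hne : T 0 ≠ 0 := h.iterate_ne_self hx one_pos
    exact hA.subset (hIoo ⟨hT0.1.lt_of_ne' hne, hT0.2⟩)
  · exact hIoo ⟨hx0, hx.2⟩

theorem exists_bound_hit (hx : x ∈ Ico (0 : ℝ) 1) (hA : A ∈ 𝓝[≥] x) :
    ∃ N, ∀ y ∈ Ico (0 : ℝ) 1, ∃ n < N, T^[n] y ∈ A := by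
  obtain ⟨u, hxu, hu⟩ := mem_nhdsGE_iff_exists_Ico_subset.1 hA
  obtain ⟨N, hN⟩ := h.exists_bound_hit_Ico hx.1 (lt_min hxu hx.2) (min_le_right u 1)
  refine ⟨N, fun y hy => (hN y hy).imp fun n hn => ⟨hn.1, hu ?_⟩⟩
  exact Ico_subset_Ico_right (min_le_left u 1) hn.2

theorem exists_symm_iterate_mem (hx : x ∈ Ico (0 : ℝ) 1) (hA : A ∈ 𝓝[≥] x)
    {y : ℝ} (hy : y ∈ Ico (0 : ℝ) 1) : ∃ n, T.symm^[n] y ∈ A := by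
  obtain ⟨N, hN⟩ := h.exists_bound_hit hx hA
  obtain ⟨n, hnN, hn⟩ := hN _ (h.isPiecewiseTranslation_symm.iterate_mem hy N)
  exact ⟨N - n, by rwa [iterate_symm_iterate T hnN.le] at hn⟩

end IsRegularExchange

end Minimality

section ReturnWord

variable {α A : Type*} {f : α → α} {J : Set α} {c : α → A} {x y : α}

/-- The return word read along the orbit of `x`: the letters given by the coding `c` up to the next
visit to `J`. -/
noncomputable def returnWord (f : α → α) (J : Set α) (c : α → A) (x : α) : List A :=
  List.ofFn fun t : Fin (returnTime f J x) => c (f^[t] x)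

theorem returnWord_eq_iff : returnWord f J c x = returnWord f J c y ↔
    returnTime f J x = returnTime f J y ∧ ∀ t < returnTime f J x, c (f^[t] x) = c (f^[t] y) := by
  rw [List.ext_getElem_iff]
  simp only [returnWord, List.length_ofFn, List.getElem_ofFn]
  exact and_congr_right fun heq => ⟨fun h t ht => h t ht (heq ▸ ht), fun h t ht _ => h t ht⟩

theorem returnWords_eq_image {U : ℕ → A} {w : List A} (hU : ∀ n, U n = c (f^[n] x))
    (hocc : ∀ i, OccursAt U w i ↔ f^[i] x ∈ J) (hret : ∀ z ∈ J, ∃ n > 0, f^[n] z ∈ J) :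
    ReturnWords U w = returnWord f J c '' {z ∈ J | ∃ i, f^[i] x = z} := by
  have hletter : ∀ i t, U (i + t) = c (f^[t] (f^[i] x)) := fun i t => by
    rw [hU, add_comm, Function.iterate_add_apply]
  have hiter : ∀ i t, f^[t] (f^[i] x) = f^[i + t] x := fun i t => by
    rw [add_comm, Function.iterate_add_apply]
  ext r
  simp only [ReturnWords, hocc, hletter, mem_ofPred_eq, mem_image]
  constructor
  · rintro ⟨i, j, hi, hj, hij, hno, rfl⟩
    refine ⟨f^[i] x, ⟨hi, i, rfl⟩, ?_⟩
    have htime : returnTime f J (f^[i] x) = j - i := by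
      refine returnTime_eq (Nat.sub_pos_of_lt hij) ?_ fun m hm hmj => ?_
      · rwa [hiter, Nat.add_sub_cancel' hij.le]
      · rw [hiter]
        exact hno _ (by lia) (by lia)
    rw [returnWord, htime]
  · rintro ⟨_, ⟨hi, i, rfl⟩, rfl⟩
    obtain ⟨hpos, hmem⟩ := returnTime_pos_and_iterate_mem (hret _ hi)
    refine ⟨i, i + returnTime f J (f^[i] x), hi, by rwa [← hiter], by lia, fun t hit ht => ?_, ?_⟩
    · obtain ⟨m, rfl⟩ := Nat.exists_eq_add_of_lt hit
      rw [add_assoc, ← hiter]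
      exact iterate_notMem_of_lt_returnTime m.succ_pos (by lia)
    · rw [Nat.add_sub_cancel_left, returnWord]

end ReturnWord

section Counting

variable {A : Type*} {T : Equiv.Perm ℝ} {D : Finset ℝ} {J : Set ℝ} {c : ℝ → A} {L n : ℕ}
  {x y p : ℝ}

theorem occursAt_iff_sameItinerary {U : ℕ → A} {w : List A} {i₀ : ℕ}
    (hc : ∀ m n, c (T^[m] x) = c (T^[n] x) ↔ Unseparated (D : Set ℝ) (T^[m] x) (T^[n] x))
    (hU : ∀ n, U n = c (T^[n] x)) (hi₀ : OccursAt U w i₀) (i : ℕ) :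
    OccursAt U w i ↔ SameItinerary T D w.length (T^[i₀] x) (T^[i] x) := by
  have hletter : ∀ t, U (i₀ + t) = U (i + t) ↔
      Unseparated (D : Set ℝ) (T^[t] (T^[i₀] x)) (T^[t] (T^[i] x)) := fun t => by
    rw [hU, hU, hc, add_comm, add_comm i, Function.iterate_add_apply, Function.iterate_add_apply]
  refine Iff.trans ?_ (forall₂_congr fun t _ => hletter t)
  exact ⟨fun h t ht => (hi₀ ⟨t, ht⟩).trans (h ⟨t, ht⟩).symm,
    fun h t => (h t t.isLt).symm.trans (hi₀ t)⟩

namespace IsPiecewiseTranslation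

variable (h : IsPiecewiseTranslation T D)
include h

theorem returnTime_eq_of_sameItinerary (hJ : IsItineraryInterval T D L J) (hx : x ∈ J) (hy : y ∈ J)
    (hxy : SameItinerary T D (returnTime T J x + L) x y) :
    returnTime T J y = returnTime T J x := by
  have hiff : ∀ m ≤ returnTime T J x, T^[m] x ∈ J ↔ T^[m] y ∈ J := fun m hm =>
    h.iterate_mem_iff_of_sameItinerary hJ (hJ.subset_Ico hx) (hJ.subset_Ico hy)
      (hxy.mono (Nat.add_le_add_right hm L))
  obtain ⟨hpos, hmem⟩ := returnTime_pos_and_iterate_mem (h.exists_iterate_mem hJ hx)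
  exact returnTime_eq hpos ((hiff _ le_rfl).1 hmem) fun m hm hlt hmJ =>
    iterate_notMem_of_lt_returnTime hm hlt ((hiff m hlt.le).2 hmJ)

theorem returnWord_eq_iff_sameItinerary (hJ : IsItineraryInterval T D L J)
    (hJL : ∀ x ∈ J, ∀ y ∈ J, SameItinerary T D L x y)
    (hc : ∀ x ∈ Ico (0 : ℝ) 1, ∀ y ∈ Ico (0 : ℝ) 1, c x = c y ↔ Unseparated (D : Set ℝ) x y)
    (hx : x ∈ J) (hy : y ∈ J) :
    returnWord T J c x = returnWord T J c y ↔
      SameItinerary T D (returnTime T J x + L) x y := by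
  have hc' : ∀ t, c (T^[t] x) = c (T^[t] y) ↔ Unseparated (D : Set ℝ) (T^[t] x) (T^[t] y) :=
    fun t => hc _ (h.iterate_mem (hJ.subset_Ico hx) t) _ (h.iterate_mem (hJ.subset_Ico hy) t)
  simp only [returnWord_eq_iff, hc']
  constructor
  · rintro ⟨htime, hxy⟩
    refine SameItinerary.add hxy (hJL _ ?_ _ ?_)
    · exact (returnTime_pos_and_iterate_mem (h.exists_iterate_mem hJ hx)).2
    · rw [htime]
      exact (returnTime_pos_and_iterate_mem (h.exists_iterate_mem hJ hy)).2
  · exact fun hxy => ⟨(h.returnTime_eq_of_sameItinerary hJ hx hy hxy).symm,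
      fun t ht => hxy t (ht.trans_le (Nat.le_add_right _ _))⟩

theorem unseparated_towerBase_of_sameItinerary (hJ : IsItineraryInterval T D L J) (hx : x ∈ J)
    (hy : y ∈ J) (hn : 0 < n) (hmem : T^[n] x ∈ J) (hxy : SameItinerary T D (n + L) x y) :
    Unseparated (towerBase T J (T^[L] ⁻¹' D)) x y := by
  have hxI := hJ.subset_Ico hx
  have hyI := hJ.subset_Ico hy
  refine .of_forall_mem_uIcc fun u ⟨hu, m, hmD, hno⟩ huxy => ?_
  have huI := hJ.subset_Ico hu
  have hxu := h.sameItinerary_of_mem_uIcc hxI hyI hxy huxy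
  have hmn : m < n := not_le.1 fun hle =>
    hno n hn hle ((h.iterate_mem_iff_of_sameItinerary hJ hxI huI hxu).1 hmem)
  have hlt : L + m < n + L := by lia
  rw [mem_preimage, ← Function.iterate_add_apply] at hmD
  rw [← h.iterate_le_iterate_iff huI hxI (hxu.symm.mono hlt.le),
    ← h.iterate_le_iterate_iff huI hyI ((hxu.symm.trans hxy).mono hlt.le)]
  exact hxy _ hlt _ hmD

theorem returnWord_eq_iff_unseparated_towerBase (hJ : IsItineraryInterval T D L J)
    (hJL : ∀ x ∈ J, ∀ y ∈ J, SameItinerary T D L x y)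
    (hc : ∀ x ∈ Ico (0 : ℝ) 1, ∀ y ∈ Ico (0 : ℝ) 1, c x = c y ↔ Unseparated (D : Set ℝ) x y)
    (hx : x ∈ J) (hy : y ∈ J) :
    returnWord T J c x = returnWord T J c y ↔
      Unseparated (towerBase T J (T^[L] ⁻¹' D)) x y := by
  rw [h.returnWord_eq_iff_sameItinerary hJ hJL hc hx hy]
  obtain ⟨hpos, hmem⟩ := returnTime_pos_and_iterate_mem (h.exists_iterate_mem hJ hx)
  exact ⟨h.unseparated_towerBase_of_sameItinerary hJ hx hy hpos hmem,
    fun hsep => h.sameItinerary_add_of_unseparated_towerBase hJ hx hy (hJL x hx y hy) hsep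
      fun _ hm hlt => iterate_notMem_of_lt_returnTime hm hlt⟩

end IsPiecewiseTranslation

namespace IsRegularExchange

variable (h : IsRegularExchange T D)
include h

theorem ncard_towerBase_preimage (hp : p ∈ Ico (0 : ℝ) 1) (hJ : J ∈ 𝓝[≥] p) (L : ℕ) :
    (towerBase T J (T^[L] ⁻¹' D)).ncard = D.card := by
  rw [ncard_towerBase, ncard_preimage_of_injective_subset_range (T.injective.iterate L),
    ncard_coe_finset]
  · rw [(T.surjective.iterate L).range_eq]
    exact subset_univ _
  · intro e he n hn hne
    rw [mem_preimage, ← Function.iterate_add_apply, add_comm, Function.iterate_add_apply] at hne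
    exact h.iterate_notMem _ he n hn hne
  · intro e he
    refine h.exists_symm_iterate_mem hp hJ ?_
    have heI := h.isPiecewiseTranslation_symm.iterate_mem (h.subset_Ico he) L
    rwa [symm_iterate_iterate T le_rfl, Nat.sub_self] at heI

/-- The smallest point of the tower base is not the left endpoint of `J`: by regularity the first
`L` points of its orbit avoid `D`, so `J` extends to its left. -/
theorem exists_mem_forall_lt_towerBase (hJ : IsItineraryInterval T D L J) (hne : J.Nonempty) :
    ∃ b ∈ J, ∀ u ∈ towerBase T J (T^[L] ⁻¹' D), b < u := by
  obtain hempty | hY := (towerBase T J (T^[L] ⁻¹' D)).eq_empty_or_nonempty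
  · exact hne.imp fun b hb => ⟨hb, by simp [hempty]⟩
  obtain ⟨u, ⟨hu, n, hnD, -⟩, hmin⟩ :=
    exists_min_image _ id (finite_towerBase_preimage T D J L) hY
  rw [mem_preimage, ← Function.iterate_add_apply] at hnD
  have hu0 : u ≠ 0 := by
    rintro rfl
    exact h.iterate_zero_notMem _ hnD
  have huI : u ∈ Ioo 0 1 := ⟨(hJ.subset_Ico hu).1.lt_of_ne' hu0, (hJ.subset_Ico hu).2⟩
  have hcut : u ∉ cuts T D L := fun ⟨_, m, hm, hmD⟩ => by
    refine h.iterate_notMem _ hmD (L + n - m) (by lia) ?_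
    rwa [← Function.iterate_add_apply, Nat.sub_add_cancel (by lia)]
  obtain ⟨b, ⟨hbI, hub⟩, hbu⟩ :=
    ((eventually_nhdsWithin_of_eventually_nhds (h.eventually_sameItinerary huI hcut)).and
      (self_mem_nhdsWithin (s := Iio u))).exists
  exact ⟨b, hJ.mem_of_sameItinerary u hu b hbI hub, fun v hv => lt_of_lt_of_le hbu (hmin v hv)⟩

theorem exists_iterate_mem_unseparated_towerBase (hJ : IsItineraryInterval T D L J) (hp : p ∈ J)
    (hx : x ∈ Ico (0 : ℝ) 1) :
    ∃ i, T^[i] x ∈ J ∧ Unseparated (towerBase T J (T^[L] ⁻¹' D)) p (T^[i] x) := by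
  obtain ⟨_, hN⟩ := h.exists_bound_hit (hJ.subset_Ico hp) <| Filter.inter_mem
    (h.itineraryInterval_mem_nhdsGE hJ hp)
    (eventually_unseparated_nhdsGE (finite_towerBase_preimage T D J L) p)
  obtain ⟨i, -, hi⟩ := hN x hx
  exact ⟨i, hi⟩

theorem ncard_returnWords {U : ℕ → A} {w : List A}
    (hc : ∀ x ∈ Ico (0 : ℝ) 1, ∀ y ∈ Ico (0 : ℝ) 1, c x = c y ↔ Unseparated (D : Set ℝ) x y)
    (hx : x ∈ Ico (0 : ℝ) 1) (hU : ∀ n, U n = c (T^[n] x)) (hw : IsFactor U w) :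
    (ReturnWords U w).Finite ∧ (ReturnWords U w).ncard = D.card + 1 := by
  obtain ⟨i₀, hi₀⟩ := hw
  have hp := h.iterate_mem hx i₀
  set p := T^[i₀] x
  set J : Set ℝ := {y ∈ Ico 0 1 | SameItinerary T D w.length p y}
  have hJ : IsItineraryInterval T D w.length J := h.isItineraryInterval_setOf_sameItinerary p _
  have hpJ : p ∈ J := ⟨hp, fun _ _ => .refl _ _⟩
  have hocc : ∀ i, OccursAt U w i ↔ T^[i] x ∈ J := fun i => by
    rw [occursAt_iff_sameItinerary (fun m n => hc _ (h.iterate_mem hx m) _ (h.iterate_mem hx n))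
      hU hi₀ i]
    exact (and_iff_right (h.iterate_mem hx i)).symm
  rw [returnWords_eq_image hU hocc fun z hz => h.exists_iterate_mem hJ hz,
    ← h.ncard_towerBase_preimage hp (h.itineraryInterval_mem_nhdsGE hJ hpJ) w.length]
  have hdense : ∀ u ∈ J, ∃ z ∈ {z ∈ J | ∃ i, T^[i] x = z},
      Unseparated (towerBase T J (T^[w.length] ⁻¹' D)) u z := fun u hu =>
    let ⟨i, hi, hsep⟩ := h.exists_iterate_mem_unseparated_towerBase hJ hu hx
    ⟨_, ⟨hi, i, rfl⟩, hsep⟩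
  refine ncard_image_of_eq_iff_unseparated (finite_towerBase_preimage T D J _)
    (fun z hz z' hz' => h.returnWord_eq_iff_unseparated_towerBase hJ
      (fun y hy y' hy' => hy.2.symm.trans hy'.2) hc hz.1 hz'.1) ?_ fun u hu => hdense u hu.1
  obtain ⟨b, hb, hlt⟩ := h.exists_mem_forall_lt_towerBase hJ ⟨p, hpJ⟩
  obtain ⟨z, hz, hbz⟩ := hdense b hb
  exact ⟨z, hz, fun u hu => not_le.1 fun huz => (hlt u hu).not_ge ((hbz u hu).2 huz)⟩

end IsRegularExchange

end Counting

section IntervalExchange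

variable {k : ℕ} {lam : Fin k → ℝ} {σ : Equiv.Perm (Fin k)} {i j : Fin k} {x y : ℝ}

theorem leftPt_of_val_eq_zero (hi : (i : ℕ) = 0) : leftPt lam i = 0 :=
  Finset.sum_eq_zero fun j hj => absurd (Finset.mem_filter.1 hj).2 (by lia)

theorem leftPt_add (lam : Fin k → ℝ) (i : Fin k) :
    leftPt lam i + lam i = ∑ j with j ≤ i, lam j := by
  have hsplit : ({j | j ≤ i} : Finset (Fin k)) = insert i ({j | j < i} : Finset (Fin k)) := by
    ext j
    simp only [Finset.mem_insert, Finset.mem_filter_univ, le_iff_eq_or_lt]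
  rw [hsplit, Finset.sum_insert (by simp), add_comm, leftPt]

theorem leftPt_of_val_eq_succ (hij : (j : ℕ) = i + 1) : leftPt lam j = leftPt lam i + lam i := by
  rw [leftPt_add, leftPt]
  exact Finset.sum_congr (Finset.filter_congr fun l _ => by lia) fun _ _ => rfl

theorem leftPt_add_of_val_add_one_eq (hi : (i : ℕ) + 1 = k) :
    leftPt lam i + lam i = ∑ j, lam j := by
  rw [leftPt_add, Finset.filter_true_of_mem fun l _ => by lia]

theorem leftPt_add_le (hpos : ∀ i, 0 < lam i) (hij : i < j) :
    leftPt lam i + lam i ≤ leftPt lam j := by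
  rw [leftPt_add]
  refine Finset.sum_le_sum_of_subset_of_nonneg (fun l hl => ?_) fun l _ _ => (hpos l).le
  rw [Finset.mem_filter_univ] at hl ⊢
  exact hl.trans_lt hij

theorem leftPt_strictMono (hpos : ∀ i, 0 < lam i) : StrictMono (leftPt lam) := fun i _ hij =>
  (lt_add_of_pos_right _ (hpos i)).trans_le (leftPt_add_le hpos hij)

theorem leftPt_mem_Xint (hpos : ∀ i, 0 < lam i) (i : Fin k) : leftPt lam i ∈ Xint lam i :=
  ⟨le_rfl, lt_add_of_pos_right _ (hpos i)⟩

theorem Xint_subset (hpos : ∀ i, 0 < lam i) (hsum : ∑ i, lam i = 1) (i : Fin k) :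
    Xint lam i ⊆ Ico 0 1 := by
  refine Ico_subset_Ico (Finset.sum_nonneg fun j _ => (hpos j).le) ?_
  rw [leftPt_add, ← hsum]
  exact Finset.sum_le_univ_sum_of_nonneg fun j => (hpos j).le

theorem leftPt_le_iff (hpos : ∀ i, 0 < lam i) (hx : x ∈ Xint lam i) : leftPt lam j ≤ x ↔ j ≤ i :=
  ⟨fun hjx => not_lt.1 fun hij => (hx.2.trans_le (leftPt_add_le hpos hij)).not_ge hjx,
    fun hji => ((leftPt_strictMono hpos).monotone hji).trans hx.1⟩

theorem Xint_unique (hpos : ∀ i, 0 < lam i) (hi : x ∈ Xint lam i) (hj : x ∈ Xint lam j) : i = j :=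
  ((leftPt_le_iff hpos hj).1 hi.1).antisymm ((leftPt_le_iff hpos hi).1 hj.1)

theorem exists_mem_Xint (hsum : ∑ i, lam i = 1) (hx : x ∈ Ico (0 : ℝ) 1) : ∃ i, x ∈ Xint lam i := by
  have hk : 0 < k := by
    by_contra! hk
    obtain rfl := Nat.le_zero.1 hk
    simp at hsum
  obtain ⟨i, hi, hmax⟩ := Finset.exists_max_image {i | leftPt lam i ≤ x} id
    ⟨⟨0, hk⟩, by simp [leftPt_of_val_eq_zero, hx.1]⟩
  rw [Finset.mem_filter_univ] at hi
  refine ⟨i, hi, ?_⟩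
  obtain hlast | hik : (i : ℕ) + 1 = k ∨ (i : ℕ) + 1 < k := by lia
  · rw [leftPt_add_of_val_add_one_eq hlast, hsum]
    exact hx.2
  · rw [← leftPt_of_val_eq_succ (j := ⟨i + 1, hik⟩) rfl]
    by_contra! hle
    exact (hmax ⟨i + 1, hik⟩ (by simpa using hle)).not_gt (Nat.lt_succ_self i)

/-- The interior division points: all left endpoints except `0`. -/
noncomputable def divisionPts (lam : Fin k → ℝ) : Finset ℝ :=
  ({i | (i : ℕ) ≠ 0} : Finset (Fin k)).image (leftPt lam)

theorem mem_divisionPts {d : ℝ} :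
    d ∈ divisionPts lam ↔ ∃ i : Fin k, (i : ℕ) ≠ 0 ∧ leftPt lam i = d := by
  simp only [divisionPts, Finset.mem_image, Finset.mem_filter_univ]

theorem card_divisionPts (hpos : ∀ i, 0 < lam i) (hk : 0 < k) :
    (divisionPts lam).card + 1 = k := by
  have : NeZero k := ⟨hk.ne'⟩
  have hfilter : ({i | (i : ℕ) ≠ 0} : Finset (Fin k)) = Finset.univ.erase 0 := by
    ext i
    simp only [Finset.mem_filter_univ, Finset.mem_erase, Finset.mem_univ, and_true,
      ne_eq, Fin.ext_iff, Fin.val_zero]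
  rw [divisionPts, Finset.card_image_of_injective _ (leftPt_strictMono hpos).injective, hfilter,
    Finset.card_erase_add_one (Finset.mem_univ _), Finset.card_univ, Fintype.card_fin]

theorem Xint_eq_iff (hpos : ∀ i, 0 < lam i) (hx : x ∈ Xint lam i) (hy : y ∈ Xint lam j) :
    i = j ↔ Unseparated (divisionPts lam : Set ℝ) x y := by
  have hsep : Unseparated (divisionPts lam : Set ℝ) x y ↔
      ∀ l : Fin k, (l : ℕ) ≠ 0 → (l ≤ i ↔ l ≤ j) := by
    simp only [Unseparated, Finset.mem_coe, mem_divisionPts, forall_exists_index, and_imp,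
      forall_apply_eq_imp_iff₂, leftPt_le_iff hpos hx, leftPt_le_iff hpos hy]
  rw [hsep]
  refine ⟨by rintro rfl _ _; rfl, fun h => ?_⟩
  have hi := h i
  have hj := h j
  lia

namespace IsIET

section

variable {T : ℝ → ℝ} (hT : IsIET lam σ T)
include hT

theorem apply_eq (hx : x ∈ Xint lam i) :
    T x = x + (leftPt (lam ∘ σ) (σ.symm i) - leftPt lam i) :=
  hT.2.2.1 i x hx

theorem apply_leftPt (j : Fin k) : T (leftPt lam (σ j)) = leftPt (lam ∘ σ) j := by
  rw [hT.apply_eq (leftPt_mem_Xint hT.1 _), Equiv.symm_apply_apply, add_sub_cancel]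

theorem apply_mem_Xint (hx : x ∈ Xint lam i) : T x ∈ Xint (lam ∘ σ) (σ.symm i) := by
  have hlen : (lam ∘ σ) (σ.symm i) = lam i := congrArg lam (σ.apply_symm_apply i)
  rw [Xint, hlen, hT.apply_eq hx]
  exact ⟨by linarith [hx.1], by linarith [hx.2]⟩

theorem comp_pos (j : Fin k) : 0 < (lam ∘ σ) j := hT.1 _

theorem sum_comp : ∑ j, (lam ∘ σ) j = 1 := (Equiv.sum_comp σ lam).trans hT.2.1

theorem apply_mem_iff (x : ℝ) : T x ∈ Ico (0 : ℝ) 1 ↔ x ∈ Ico (0 : ℝ) 1 := by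
  refine ⟨fun hTx => by_contra fun hx => hx (by rwa [hT.2.2.2 x hx] at hTx), fun hx => ?_⟩
  obtain ⟨i, hi⟩ := exists_mem_Xint hT.2.1 hx
  exact Xint_subset hT.comp_pos hT.sum_comp _ (hT.apply_mem_Xint hi)

theorem apply_add_transAmt_symm (hy : y ∈ Xint (lam ∘ σ) j) :
    T (y + transAmt (lam ∘ σ) σ.symm j) = y := by
  have hamt : transAmt (lam ∘ σ) σ.symm j = leftPt lam (σ j) - leftPt (lam ∘ σ) j := by
    simp only [transAmt, leftPt, Equiv.symm_symm, Function.comp_apply, Equiv.apply_symm_apply]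
  have hmem : y + transAmt (lam ∘ σ) σ.symm j ∈ Xint lam (σ j) := by
    obtain ⟨hle, hlt⟩ := hy
    rw [Function.comp_apply] at hlt
    exact ⟨by linarith, by linarith⟩
  rw [hT.apply_eq hmem, hamt, Equiv.symm_apply_apply]
  ring

theorem injective : Function.Injective T := fun x y hxy => by
  by_cases hx : x ∈ Ico (0 : ℝ) 1
  · have hy : y ∈ Ico (0 : ℝ) 1 := by rwa [← hT.apply_mem_iff, ← hxy, hT.apply_mem_iff]
    obtain ⟨i, hi⟩ := exists_mem_Xint hT.2.1 hx
    obtain ⟨j, hj⟩ := exists_mem_Xint hT.2.1 hy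
    obtain rfl : i = j := σ.symm.injective <|
      Xint_unique hT.comp_pos (hxy ▸ hT.apply_mem_Xint hi) (hT.apply_mem_Xint hj)
    rwa [hT.apply_eq hi, hT.apply_eq hj, add_left_inj] at hxy
  · have hy : y ∉ Ico (0 : ℝ) 1 := by rwa [← hT.apply_mem_iff, ← hxy, hT.apply_mem_iff]
    rwa [hT.2.2.2 x hx, hT.2.2.2 y hy] at hxy

theorem surjective : Function.Surjective T := fun y => by
  by_cases hy : y ∈ Ico (0 : ℝ) 1
  · obtain ⟨j, hj⟩ := exists_mem_Xint hT.sum_comp hy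
    exact ⟨_, hT.apply_add_transAmt_symm hj⟩
  · exact ⟨y, hT.2.2.2 y hy⟩

end

variable {T : Equiv.Perm ℝ} (hT : IsIET lam σ T)
include hT

protected theorem symm : IsIET (lam ∘ σ) σ.symm T.symm :=
  ⟨hT.comp_pos, hT.sum_comp, fun _ _ hy => T.symm_apply_eq.2 (hT.apply_add_transAmt_symm hy).symm,
    fun y hy => T.symm_apply_eq.2 (hT.2.2.2 y hy).symm⟩

theorem isPiecewiseTranslation : IsPiecewiseTranslation T (divisionPts lam) where
  apply_mem_iff := hT.apply_mem_iff
  apply_sub_apply x hx y hy hxy := by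
    obtain ⟨i, hi⟩ := exists_mem_Xint hT.2.1 hx
    obtain ⟨j, hj⟩ := exists_mem_Xint hT.2.1 hy
    obtain rfl := (Xint_eq_iff hT.1 hi hj).2 hxy
    rw [hT.apply_eq hi, hT.apply_eq hj, add_sub_add_right_eq_sub]

theorem divisionPts_comp_subset :
    divisionPts (lam ∘ σ) ⊆ (insert 0 (divisionPts lam)).image T := fun d hd => by
  obtain ⟨j, -, rfl⟩ := mem_divisionPts.1 hd
  refine Finset.mem_image.2 ⟨leftPt lam (σ j), Finset.mem_insert.2 ?_, hT.apply_leftPt j⟩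
  exact (eq_or_ne (σ j : ℕ) 0).imp leftPt_of_val_eq_zero fun hj =>
    mem_divisionPts.2 ⟨σ j, hj, rfl⟩

/-- If `T` fixed `0`, the interval moved into second place would be sent onto one starting at the
first division point, against Keane's condition. -/
theorem symm_zero_mem_divisionPts (hreg : KeaneRegular lam T) (hk : 2 ≤ k) :
    T.symm 0 ∈ divisionPts lam := by
  set i₀ : Fin k := ⟨0, by lia⟩
  set i₁ : Fin k := ⟨1, by lia⟩
  refine mem_divisionPts.2 ⟨σ i₀, fun h0 => ?_, ?_⟩
  · have hσ0 : σ i₀ = i₀ := Fin.ext h0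
    have hσ1 : (σ i₁ : ℕ) ≠ 0 := fun h1 =>
      absurd (σ.injective (Fin.ext (h1.trans h0.symm))) (by simp [i₀, i₁])
    have hT1 : T (leftPt lam (σ i₁)) = leftPt lam i₁ := by
      have hsucc : (i₁ : ℕ) = i₀ + 1 := rfl
      rw [hT.apply_leftPt, leftPt_of_val_eq_succ hsucc, leftPt_of_val_eq_succ hsucc,
        leftPt_of_val_eq_zero rfl, leftPt_of_val_eq_zero rfl, Function.comp_apply, hσ0]
    exact one_ne_zero (hreg 1 _ i₁ hσ1 one_ne_zero hT1).1
  · rw [Equiv.eq_symm_apply, hT.apply_leftPt, leftPt_of_val_eq_zero rfl]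

theorem isRegularExchange (hreg : KeaneRegular lam T) (hk : 2 ≤ k) :
    IsRegularExchange T (divisionPts lam) where
  toIsPiecewiseTranslation := hT.isPiecewiseTranslation
  subset_Ico d hd := by
    obtain ⟨i, -, rfl⟩ := mem_divisionPts.1 hd
    exact Xint_subset hT.1 hT.2.1 i (leftPt_mem_Xint hT.1 i)
  symm_zero_mem := hT.symm_zero_mem_divisionPts hreg hk
  iterate_notMem d hd n hn hnD := by
    obtain ⟨i, hi, rfl⟩ := mem_divisionPts.1 hd
    obtain ⟨j, hj, heq⟩ := mem_divisionPts.1 hnD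
    exact hn.ne' (hreg n i j hi hj heq.symm).1
  isPiecewiseTranslation_symm := hT.symm.isPiecewiseTranslation.mono hT.divisionPts_comp_subset

end IsIET

end IntervalExchange

theorem returnWords_of_subsingleton {A : Type*} [Subsingleton A] (U : ℕ → A) (w : List A) :
    ReturnWords U w = {[U 0]} := by
  have hocc : ∀ i, OccursAt U w i := fun i j => Subsingleton.elim _ _
  refine eq_singleton_iff_unique_mem.2 ⟨⟨0, 1, hocc 0, hocc 1, one_pos, by lia, by simp⟩, ?_⟩
  rintro _ ⟨i, j, -, -, hij, hno, rfl⟩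
  have hji : j ≤ i + 1 := not_lt.1 fun hlt => hno (i + 1) i.lt_succ_self hlt (hocc _)
  obtain rfl : j = i + 1 := hji.antisymm hij
  exact List.ext_getElem (by simp) fun _ _ _ => Subsingleton.elim _ _

end

/-- main theorem: the coding of the orbit of any point under a
regular interval exchange transformation on `k` intervals has property `R_k`:
every factor has exactly `k` return words. -/
theorem regular_iet_coding_has_property_R_k
    (k : ℕ) (lam : Fin k → ℝ) (σ : Equiv.Perm (Fin k)) (T : ℝ → ℝ)
    (hT : IsIET lam σ T) (hreg : KeaneRegular lam T)
    (x : ℝ) (hx : x ∈ Set.Ico (0:ℝ) 1)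
    (U : ℕ → Fin k) (hU : IsCoding lam T x U) :
    ∀ w : List (Fin k), IsFactor U w →
      (ReturnWords U w).Finite ∧ (ReturnWords U w).ncard = k := by
  intro w hw
  have hk : 0 < k := (U 0).pos
  obtain rfl | hk2 : k = 1 ∨ 2 ≤ k := by lia
  · rw [returnWords_of_subsingleton]
    exact ⟨finite_singleton _, ncard_singleton _⟩
  lift T to Equiv.Perm ℝ using ⟨hT.injective, hT.surjective⟩
  have hTreg := hT.isRegularExchange hreg hk2
  have : Nonempty (Fin k) := ⟨U 0⟩
  choose! c hc using fun y hy => exists_mem_Xint (x := y) hT.2.1 hy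
  have hUc : ∀ n, U n = c (T^[n] x) := fun n =>
    Xint_unique hT.1 (hU n) (hc _ (hTreg.iterate_mem hx n))
  obtain ⟨hfin, hcard⟩ := hTreg.ncard_returnWords
    (fun y hy z hz => Xint_eq_iff hT.1 (hc y hy) (hc z hz)) hx hUc hw
  exact ⟨hfin, hcard.trans (card_divisionPts hT.1 hk)⟩
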